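/- There exists N such that for every n ≥ N and every Boolean function f on n variables, L₃(f) ≤ 2^{n+3}/n. -/

import Mathlib

/-!
The cube is split as `{0,1}^m × {0,1}^k` with `k = ⌊n/2⌋`, `m = ⌈n/2⌉`. For a centre
`c ∈ {0,1}^m`, let `S(c)` be the set of the `m` points at Hamming distance exactly one from `c`.
The function `f` restricted to `S(c) × {0,1}^k` is a CNF with at most `m² + 2^k` clauses
(`sphereCNF`):

* for all `i ≠ j`, a clause forbidding that both coordinates `i`, `j` differ from `c`;
* for every `a ∈ {0,1}^k`, a clause saying that, if the last `k` coordinates equal `a`, then some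
  `i` with `f (c with coordinate i flipped, a) = 1` has its coordinate differing from `c`.

The second kind of clause treats a whole sphere of `m` inputs at once, which is where the saving
of a factor of order `n` comes from. The spheres `S(c)` must cover `{0,1}^m`
(`exists_covering_code`): with `2^r ≤ m < 2^(r+1)` take a surjective
`h : Fin m → 𝔽₂^r` and the syndrome `s(y) = ∑ y_i h(i)`. Every fibre of `s` is a covering code,
since flipping coordinate `i` adds `h(i)` to the syndrome, and some fibre has at most `2^(m-r)`
elements. As `m² ≤ 2^k` for large `n`, the total size is at most
`2^(m-r) · 2 · 2^k = 2^(n+1) / 2^r ≤ 2^(n+3) / n`.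
-/

/-- A literal over `n` variables: a coordinate `x_i` (if `neg = false`)
or its negation `¬ x_i` (if `neg = true`). -/
structure Lit (n : ℕ) where
  idx : Fin n
  neg : Bool
deriving DecidableEq

/-- Evaluation of a literal at an assignment. -/
def Lit.eval {n : ℕ} (l : Lit n) (x : Fin n → Bool) : Bool :=
  if l.neg then !(x l.idx) else x l.idx

/-- A clause: a finite set of literals, evaluated as their disjunction. -/
abbrev Clause (n : ℕ) := Finset (Lit n)

/-- A CNF formula: a finite set of clauses, evaluated as their conjunction.
Its size is its number of clauses (`Finset.card`). -/
abbrev CNF (n : ℕ) := Finset (Clause n)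

/-- `φ.sat x` means the CNF formula `φ` evaluates to `1` at `x`. -/
def CNF.sat {n : ℕ} (φ : CNF n) (x : Fin n → Bool) : Prop :=
  ∀ c ∈ φ, ∃ l ∈ c, l.eval x = true

instance {n : ℕ} (φ : CNF n) (x : Fin n → Bool) : Decidable (φ.sat x) :=
  inferInstanceAs (Decidable (∀ c ∈ φ, ∃ l ∈ c, Lit.eval l x = true))

/-- `φ⁻¹(1) ⊆ f⁻¹(1)`: the formula does not err on inputs where `f` is `0`. -/
def CNF.onesided {n : ℕ} (φ : CNF n) (f : (Fin n → Bool) → Bool) : Prop :=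
  ∀ x, φ.sat x → f x = true

/-- A CNF formula is monotone if none of its literals is negated. -/
def CNF.mono {n : ℕ} (φ : CNF n) : Prop :=
  ∀ c ∈ φ, ∀ l ∈ c, l.neg = false

/-- A distribution on `f⁻¹(1)`: nonnegative, supported on `f⁻¹(1)`, summing to 1. -/
def IsDistOn {n : ℕ} (μ : (Fin n → Bool) → ℝ) (f : (Fin n → Bool) → Bool) : Prop :=
  (∀ x, 0 ≤ μ x) ∧ (∀ x, f x = false → μ x = 0) ∧ (∑ x, μ x) = 1

/-- `Pr_{x ∼ μ}[φ(x) = 1]`. -/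
noncomputable def CNF.pr {n : ℕ} (φ : CNF n) (μ : (Fin n → Bool) → ℝ) : ℝ :=
  ∑ x, if φ.sat x then μ x else 0

/-- `D_μ(f)`: the maximum, over CNF formulas `φ` with `φ⁻¹(1) ⊆ f⁻¹(1)` and `|φ| ≥ 1`,
of `Pr_{x∼μ}[φ(x)=1] / |φ|` (0 if there is no such formula). -/
noncomputable def Dmu {n : ℕ} (f : (Fin n → Bool) → Bool) (μ : (Fin n → Bool) → ℝ) : ℝ :=
  sSup {r : ℝ | ∃ φ : CNF n, φ.onesided f ∧ 1 ≤ φ.card ∧ r = φ.pr μ / φ.card}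

/-- `D(f)`: the minimum of `D_μ(f)` over distributions `μ` on `f⁻¹(1)`. -/
noncomputable def Dof {n : ℕ} (f : (Fin n → Bool) → Bool) : ℝ :=
  sInf {r : ℝ | ∃ μ, IsDistOn μ f ∧ r = Dmu f μ}

/-- The monotone variant `D⁺_μ(f)`, restricted to monotone CNF formulas. -/
noncomputable def DmuPlus {n : ℕ} (f : (Fin n → Bool) → Bool) (μ : (Fin n → Bool) → ℝ) : ℝ :=
  sSup {r : ℝ | ∃ φ : CNF n, φ.mono ∧ φ.onesided f ∧ 1 ≤ φ.card ∧ r = φ.pr μ / φ.card}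

/-- `D⁺(f)`: the minimum of `D⁺_μ(f)` over distributions `μ` on `f⁻¹(1)`. -/
noncomputable def DPlus {n : ℕ} (f : (Fin n → Bool) → Bool) : ℝ :=
  sInf {r : ℝ | ∃ μ, IsDistOn μ f ∧ r = DmuPlus f μ}

/-- A list of CNF formulas computes `f` as their pointwise disjunction. -/
def ComputedByOr {n : ℕ} (L : List (CNF n)) (f : (Fin n → Bool) → Bool) : Prop :=
  ∀ x, f x = true ↔ ∃ φ ∈ L, φ.sat x

/-- `L₃(f)`: the minimum size (total number of clauses) of a depth-3 formula computing `f`. -/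
noncomputable def L3 {n : ℕ} (f : (Fin n → Bool) → Bool) : ℕ :=
  sInf {s : ℕ | ∃ L : List (CNF n), ComputedByOr L f ∧ s = (L.map Finset.card).sum}

/-- `L₃⁺(f)`: the minimum size of a depth-3 monotone formula computing `f`. -/
noncomputable def L3Plus {n : ℕ} (f : (Fin n → Bool) → Bool) : ℕ :=
  sInf {s : ℕ | ∃ L : List (CNF n), (∀ φ ∈ L, φ.mono) ∧ ComputedByOr L f ∧
    s = (L.map Finset.card).sum}

/-- The number of ones in a Boolean input. -/
def ones {n : ℕ} (x : Fin n → Bool) : ℕ := (Finset.univ.filter fun i => x i = true).card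

/-- The parity function: `1` iff the number of ones is odd. -/
def parityF (n : ℕ) : (Fin n → Bool) → Bool := fun x => decide (ones x % 2 = 1)

/-- The majority function: `1` iff the number of ones is at least `n/2`. -/
def majF (n : ℕ) : (Fin n → Bool) → Bool := fun x => decide (n ≤ 2 * ones x)

/-- `Pr_{x uniform in f⁻¹(1)}[φ(x) = 1]`. -/
noncomputable def prUnif {n : ℕ} (f : (Fin n → Bool) → Bool) (φ : CNF n) : ℝ :=
  ((Finset.univ.filter fun x => f x = true ∧ φ.sat x).card : ℝ) /
    ((Finset.univ.filter fun x => f x = true).card : ℝ)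

/-- `x` is an isolated solution of `φ`: `φ(x)=1` and `φ(y)=0` for every `y`
differing from `x` in exactly one coordinate. -/
def IsIsolated {n : ℕ} (φ : CNF n) (x : Fin n → Bool) : Prop :=
  φ.sat x ∧ ∀ y : Fin n → Bool, hammingDist x y = 1 → ¬ φ.sat y

/-! ### Covering the cube by Hamming spheres -/

/-- The point `c` with its `i`-th coordinate flipped. -/
def flipAt {m : ℕ} (c : Fin m → Bool) (i : Fin m) : Fin m → Bool :=
  Function.update c i (!c i)

theorem flipAt_flipAt {m : ℕ} (c : Fin m → Bool) (i : Fin m) :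
    flipAt (flipAt c i) i = c := by
  simp [flipAt]

theorem eq_flipAt {m : ℕ} {c y : Fin m → Bool} {i : Fin m} (hi : y i ≠ c i)
    (h : ∀ j, j ≠ i → y j = c j) : y = flipAt c i := by
  funext j
  by_cases hj : j = i
  · subst hj
    simpa [flipAt, Bool.eq_not] using hi
  · simp [flipAt, hj, h j hj]

/-- The linear syndrome of `y` with respect to the columns `h i` of a parity-check matrix. -/
def syndrome {m r : ℕ} (h : Fin m → (Fin r → ZMod 2)) (y : Fin m → Bool) : Fin r → ZMod 2 :=
  ∑ i, if y i then h i else 0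

theorem syndrome_flipAt {m r : ℕ} (h : Fin m → (Fin r → ZMod 2)) (y : Fin m → Bool) (i : Fin m) :
    syndrome h (flipAt y i) = syndrome h y + h i := by
  have two : h i + h i = 0 := by
    funext j
    exact CharTwo.add_self_eq_zero (h i j)
  unfold syndrome
  rw [← Finset.add_sum_erase _ _ (Finset.mem_univ i),
    ← Finset.add_sum_erase (a := i) _ (fun j => if y j then h j else 0) (Finset.mem_univ i)]
  have : ∑ j ∈ Finset.univ.erase i, (if flipAt y i j then h j else 0)
      = ∑ j ∈ Finset.univ.erase i, (if y j then h j else 0) := by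
    refine Finset.sum_congr rfl fun j hj => ?_
    simp [flipAt, Finset.ne_of_mem_erase hj]
  rw [this]
  cases hy : y i
  · simp [flipAt, hy, add_comm]
  · simp only [flipAt, Function.update_self, hy, Bool.not_true, Bool.false_eq_true, if_false,
      if_true]
    rw [add_right_comm, two]

/-- A Hamming-type covering code: spheres of radius exactly one around at most `2^(m-r)` centres
cover `{0,1}^m`. The column map is onto all of `𝔽₂^r`, including `0`, so that the centres too lie
on such spheres. -/
theorem exists_covering_code {m r : ℕ} (hr : 2 ^ r ≤ m) :
    ∃ C : Finset (Fin m → Bool), C.card ≤ 2 ^ (m - r) ∧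
      ∀ y, ∃ c ∈ C, ∃ i, y = flipAt c i := by
  have hrm : r ≤ m := (Nat.lt_two_pow_self).le.trans hr
  have hcard : Fintype.card (Fin r → ZMod 2) = 2 ^ r := by simp [ZMod.card]
  obtain ⟨e⟩ := Function.Embedding.nonempty_of_card_le
    (α := Fin r → ZMod 2) (β := Fin m) (by simpa [hcard] using hr)
  set h := Function.invFun e with hh
  have hsurj : Function.Surjective h := Function.invFun_surjective e.injective
  obtain ⟨t, ht⟩ := Fintype.exists_card_fiber_le_of_card_le_mul
    (f := syndrome h) (n := 2 ^ (m - r)) (by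
      rw [hcard, ← pow_add, Nat.add_sub_cancel' hrm]; simp)
  refine ⟨_, ht, fun y => ?_⟩
  obtain ⟨i, hi⟩ := hsurj (t - syndrome h y)
  refine ⟨flipAt y i, ?_, i, (flipAt_flipAt y i).symm⟩
  simp [syndrome_flipAt, hi]

/-! ### The CNF of a function restricted to a sphere times a cube -/

theorem Lit.eval_eq_true_iff {n : ℕ} (l : Lit n) (x : Fin n → Bool) :
    l.eval x = true ↔ x l.idx ≠ l.neg := by
  rcases l with ⟨i, b⟩
  cases b <;> simp [Lit.eval]

/-- Clause stating that `c` agrees with the input in one of the coordinates `p.1`, `p.2`. -/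
def pairClause {m : ℕ} (k : ℕ) (c : Fin m → Bool) (p : Fin m × Fin m) : Clause (m + k) :=
  {⟨Fin.castAdd k p.1, !c p.1⟩, ⟨Fin.castAdd k p.2, !c p.2⟩}

/-- Clause stating that, if the last `k` coordinates of the input equal `a`, then the input differs
from `c` in some coordinate `i` such that `f` accepts `c` flipped at `i`, followed by `a`. -/
def valueClause {m k : ℕ} (f : (Fin (m + k) → Bool) → Bool) (c : Fin m → Bool)
    (a : Fin k → Bool) : Clause (m + k) :=
  (Finset.univ.image fun j => (⟨Fin.natAdd m j, a j⟩ : Lit (m + k))) ∪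
    ((Finset.univ.filter fun i => f (Fin.append (flipAt c i) a) = true).image
      fun i => (⟨Fin.castAdd k i, c i⟩ : Lit (m + k)))

/-- CNF computing the restriction of `f` to the inputs whose first `m` coordinates are at Hamming
distance exactly one from `c`. -/
def sphereCNF {m k : ℕ} (f : (Fin (m + k) → Bool) → Bool) (c : Fin m → Bool) : CNF (m + k) :=
  (Finset.univ : Finset (Fin m)).offDiag.image (pairClause k c) ∪
    Finset.univ.image (valueClause f c)

theorem sphereCNF_card {m k : ℕ} (f : (Fin (m + k) → Bool) → Bool) (c : Fin m → Bool) :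
    (sphereCNF f c).card ≤ m ^ 2 + 2 ^ k := by
  refine (Finset.card_union_le _ _).trans (Nat.add_le_add ?_ ?_)
  · refine Finset.card_image_le.trans ?_
    rw [Finset.offDiag_card, Finset.card_univ, Fintype.card_fin, pow_two]
    exact Nat.sub_le _ _
  · exact Finset.card_image_le.trans (by simp)

theorem pairClause_sat {m k : ℕ} (c y : Fin m → Bool) (z : Fin k → Bool) (p : Fin m × Fin m) :
    (∃ l ∈ pairClause k c p, l.eval (Fin.append y z) = true) ↔ y p.1 = c p.1 ∨ y p.2 = c p.2 := by
  simp [pairClause, Lit.eval_eq_true_iff]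

theorem valueClause_sat {m k : ℕ} (f : (Fin (m + k) → Bool) → Bool) (c y : Fin m → Bool)
    (a z : Fin k → Bool) :
    (∃ l ∈ valueClause f c a, l.eval (Fin.append y z) = true) ↔
      (∃ j, z j ≠ a j) ∨ ∃ i, f (Fin.append (flipAt c i) a) = true ∧ y i ≠ c i := by
  simp only [valueClause, Finset.mem_union, Finset.mem_image, Finset.mem_filter, Finset.mem_univ,
    true_and, Lit.eval_eq_true_iff]
  constructor
  · rintro ⟨l, ⟨j, rfl⟩ | ⟨i, hi, rfl⟩, h⟩
    · exact Or.inl ⟨j, by simpa using h⟩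
    · exact Or.inr ⟨i, hi, by simpa using h⟩
  · rintro (⟨j, h⟩ | ⟨i, hi, h⟩)
    · exact ⟨_, Or.inl ⟨j, rfl⟩, by simpa using h⟩
    · exact ⟨_, Or.inr ⟨i, hi, rfl⟩, by simpa using h⟩

theorem sphereCNF_sat {m k : ℕ} (f : (Fin (m + k) → Bool) → Bool) (c y : Fin m → Bool)
    (z : Fin k → Bool) :
    (sphereCNF f c).sat (Fin.append y z) ↔
      (∃ i, y = flipAt c i) ∧ f (Fin.append y z) = true := by
  constructor
  · intro h
    have hval := (valueClause_sat f c y z z).1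
      (h _ (Finset.mem_union_right _ (Finset.mem_image_of_mem _ (Finset.mem_univ z))))
    obtain ⟨j, hj⟩ | ⟨i, hf, hi⟩ := hval
    · exact absurd rfl hj
    · have hy : y = flipAt c i := by
        refine eq_flipAt hi fun j hj => ?_
        have hpair := (pairClause_sat c y z (j, i)).1
          (h _ (Finset.mem_union_left _ (Finset.mem_image_of_mem _ (by simpa using hj))))
        exact hpair.resolve_right hi
      exact ⟨⟨i, hy⟩, hy ▸ hf⟩
  · rintro ⟨⟨i, rfl⟩, hf⟩ C hC
    obtain hC | hC := Finset.mem_union.1 hC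
    · obtain ⟨p, hp, rfl⟩ := Finset.mem_image.1 hC
      rw [pairClause_sat]
      have hne : p.1 ≠ p.2 := by simpa using hp
      by_cases h1 : p.1 = i
      · right
        have h2 : p.2 ≠ i := fun h => hne (h1.trans h.symm)
        simp [flipAt, h2]
      · left
        simp [flipAt, h1]
    · obtain ⟨a, -, rfl⟩ := Finset.mem_image.1 hC
      rw [valueClause_sat]
      by_cases ha : z = a
      · subst ha
        exact Or.inr ⟨i, hf, by simp [flipAt]⟩
      · exact Or.inl (Function.ne_iff.1 ha)

/-! ### The size bound -/

/-- The disjunction of `sphereCNF f c` over the centres `c` of a covering code computes `f`. -/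
theorem L3_le_of_pow_le {m k r : ℕ} (hr : 2 ^ r ≤ m) (f : (Fin (m + k) → Bool) → Bool) :
    L3 f ≤ 2 ^ (m - r) * (m ^ 2 + 2 ^ k) := by
  obtain ⟨C, hC, hcov⟩ := exists_covering_code hr
  have hmem : ((C.toList.map (sphereCNF f)).map Finset.card).sum ∈
      {s : ℕ | ∃ L : List (CNF (m + k)), ComputedByOr L f ∧ s = (L.map Finset.card).sum} := by
    refine ⟨_, fun x => ?_, rfl⟩
    obtain ⟨y, z, rfl⟩ : ∃ y z, x = Fin.append y z :=
      ⟨_, _, (Fin.append_castAdd_natAdd (f := x)).symm⟩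
    constructor
    · intro hx
      obtain ⟨c, hc, hy⟩ := hcov y
      exact ⟨_, List.mem_map_of_mem (Finset.mem_toList.2 hc), (sphereCNF_sat f c y z).2 ⟨hy, hx⟩⟩
    · rintro ⟨φ, hφ, hs⟩
      obtain ⟨c, -, rfl⟩ := List.mem_map.1 hφ
      exact ((sphereCNF_sat f c y z).1 hs).2
  refine (Nat.sInf_le hmem).trans ?_
  refine (List.sum_le_card_nsmul _ (m ^ 2 + 2 ^ k) ?_).trans ?_
  · intro s hs
    simp only [List.mem_map] at hs
    obtain ⟨φ, ⟨c, -, rfl⟩, rfl⟩ := hs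
    exact sphereCNF_card f c
  · simp only [List.length_map, Finset.length_toList, smul_eq_mul]
    exact Nat.mul_le_mul_right _ hC

theorem succ_sq_le_two_pow (k : ℕ) (hk : 6 ≤ k) : (k + 1) ^ 2 ≤ 2 ^ k := by
  induction k, hk using Nat.le_induction with
  | base => norm_num
  | succ k hk ih => rw [pow_succ 2]; nlinarith

/-- every function has a depth-3 formula of size at most `2^{n+3}/n`. -/
theorem stmt12 : ∃ N : ℕ, ∀ n : ℕ, N ≤ n → ∀ f : (Fin n → Bool) → Bool,
    (L3 f : ℝ) ≤ (2 : ℝ) ^ (n + 3) / n := by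
  refine ⟨12, fun n hn => ?_⟩
  obtain ⟨m, k, rfl, hkm, hmk, hk⟩ : ∃ m k : ℕ, n = m + k ∧ k ≤ m ∧ m ≤ k + 1 ∧ 6 ≤ k :=
    ⟨n - n / 2, n / 2, by omega, by omega, by omega, by omega⟩
  intro f
  obtain ⟨r, hr1, hr2⟩ : ∃ r : ℕ, 2 ^ r ≤ m ∧ m < 2 ^ (r + 1) :=
    ⟨Nat.log 2 m, Nat.pow_log_le_self 2 (by omega), Nat.lt_pow_succ_log_self (by norm_num) m⟩
  have hrm : r ≤ m := (Nat.lt_two_pow_self).le.trans hr1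
  have hm : m ^ 2 ≤ 2 ^ k := (Nat.pow_le_pow_left hmk 2).trans (succ_sq_le_two_pow k hk)
  have hL : L3 f ≤ 2 ^ (m - r) * (2 * 2 ^ k) :=
    (L3_le_of_pow_le hr1 f).trans (Nat.mul_le_mul_left _ (by omega))
  -- `m + k ≤ 2 m < 2 ^ (r + 2)`; this and the factor `2` in `hL` account for the constant `8`.
  have hn4 : m + k ≤ 2 ^ (r + 2) := by
    rw [pow_succ] at hr2 ⊢
    omega
  have key : L3 f * (m + k) ≤ 2 ^ (m + k + 3) := by
    calc L3 f * (m + k) ≤ 2 ^ (m - r) * (2 * 2 ^ k) * 2 ^ (r + 2) := Nat.mul_le_mul hL hn4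
      _ = 2 ^ (m + k + 3) := by
        rw [← pow_succ', ← pow_add, ← pow_add]
        congr 1
        omega
  rw [le_div_iff₀ (by exact_mod_cast (by omega : 0 < m + k))]
  exact_mod_cast key
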